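/- Suppose 1/n ≪ c, β, 1/k, 1/b < 1, and H is a k-partite k-uniform hypergraph on vertex classes X_1, ..., X_k with n ≤ |X_i| ≤ bn for each i, of density d(H) ≥ c. Suppose β|X_i| ≤ t_i ≤ |X_i| for each i. If W_i ⊆ X_i is chosen uniformly at random with |W_i| = t_i, independently for each i, and W = W_1 ∪ ... ∪ W_k, then with probability at least 1 - 1/n², the restriction H[W] has density greater than c/2. -/

import Mathlib

open Finset in
lemma aux_double {α : Type} [DecidableEq α] (X : Finset α) (t : ℕ) (F : Finset α → ℝ) :
    ((t : ℝ) + 1) * ∑ W ∈ X.powersetCard (t + 1), F W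
      = ∑ x ∈ X, ∑ V ∈ (X.erase x).powersetCard t, F (insert x V) := by
  have h1 : ((t : ℝ) + 1) * ∑ W ∈ X.powersetCard (t + 1), F W
      = ∑ W ∈ X.powersetCard (t + 1), ∑ x ∈ W, F W := by
    rw [Finset.mul_sum]
    refine Finset.sum_congr rfl fun W hW => ?_
    rw [Finset.mem_powersetCard] at hW
    simp [hW.2]
  have h2 : ∑ W ∈ X.powersetCard (t + 1), ∑ x ∈ W, F W
      = ∑ x ∈ X, ∑ W ∈ (X.powersetCard (t + 1)).filter (fun W => x ∈ W), F W := by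
    refine Finset.sum_comm' fun W x => ?_
    simp only [Finset.mem_powersetCard, Finset.mem_filter]
    constructor
    · rintro ⟨⟨h1, h2⟩, h3⟩
      exact ⟨⟨⟨h1, h2⟩, h3⟩, h1 h3⟩
    · rintro ⟨⟨⟨h1, h2⟩, h3⟩, _⟩
      exact ⟨⟨h1, h2⟩, h3⟩
  rw [h1, h2]
  refine Finset.sum_congr rfl fun x hx => ?_
  refine Finset.sum_nbij' (fun W => W.erase x) (fun V => insert x V) ?_ ?_ ?_ ?_ ?_
  · intro W hW
    simp only [Finset.mem_powersetCard, Finset.mem_filter] at hW ⊢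
    refine ⟨Finset.erase_subset_erase x hW.1.1, ?_⟩
    rw [Finset.card_erase_of_mem hW.2, hW.1.2]; rfl
  · intro V hV
    simp only [Finset.mem_powersetCard, Finset.mem_filter] at hV ⊢
    have hxV : x ∉ V := fun h => by simpa using hV.1 h
    refine ⟨⟨Finset.insert_subset hx (hV.1.trans (Finset.erase_subset _ _)), ?_⟩,
      Finset.mem_insert_self _ _⟩
    rw [Finset.card_insert_of_notMem hxV, hV.2]
  · intro W hW
    exact Finset.insert_erase (Finset.mem_filter.1 hW).2
  · intro V hV
    rw [Finset.mem_powersetCard] at hV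
    exact Finset.erase_insert fun h => by simpa using hV.1 h
  · intro W hW
    rw [Finset.insert_erase (Finset.mem_filter.1 hW).2]

lemma aux_mgf {α : Type} [DecidableEq α] (g : α → ℝ) (hg0 : ∀ x, 0 ≤ g x) (hg1 : ∀ x, g x ≤ 1)
    (l : ℝ) (hl0 : 0 ≤ l) (hl1 : l ≤ 1) (t : ℕ) :
    ∀ X : Finset α, t ≤ X.card →
      ∑ W ∈ X.powersetCard t, Real.exp (l * (t * ((∑ x ∈ X, g x) / X.card) - ∑ x ∈ W, g x))
        ≤ (X.card.choose t : ℝ) * Real.exp (t * l ^ 2) := by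
  induction t with
  | zero => intro X _; simp
  | succ t ih =>
    intro X hX
    obtain ⟨N, hN⟩ : ∃ N, X.card = N + 1 := ⟨X.card - 1, by omega⟩
    set μ : ℝ := (∑ x ∈ X, g x) / X.card with hμ
    have htN : t ≤ N := by omega
    have hNpos : (0 : ℝ) < (N : ℝ) + 1 := by positivity
    have hsum : ∑ x ∈ X, g x = (N + 1) * μ := by
      rw [hμ, hN]; push_cast; field_simp
    have hμ0 : 0 ≤ μ := div_nonneg (Finset.sum_nonneg fun x _ => hg0 x) (Nat.cast_nonneg _)
    have hμ1 : μ ≤ 1 := by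
      have : ∑ x ∈ X, g x ≤ X.card := by
        calc ∑ x ∈ X, g x ≤ ∑ x ∈ X, (1 : ℝ) := Finset.sum_le_sum fun x _ => hg1 x
          _ = X.card := by simp
      rw [hsum, hN] at this
      push_cast at this
      nlinarith
    set θ : ℝ := 1 - t / N with hθ
    have hfrac0 : (0 : ℝ) ≤ t / N := by positivity
    have hfrac1 : (t : ℝ) / N ≤ 1 := div_le_one_of_le₀ (by exact_mod_cast htN) (by positivity)
    have hθ0 : 0 ≤ θ := by linarith
    have hθ1 : θ ≤ 1 := by linarith
    have key : ((t : ℝ) + 1) * ∑ W ∈ X.powersetCard (t + 1),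
        Real.exp (l * (((t + 1 : ℕ) : ℝ) * μ - ∑ x ∈ W, g x))
        ≤ ((t : ℝ) + 1) * ((X.card.choose (t + 1) : ℝ) * Real.exp (((t + 1 : ℕ) : ℝ) * l ^ 2)) := by
      rw [aux_double]
      have step : ∀ x ∈ X, ∑ V ∈ (X.erase x).powersetCard t,
          Real.exp (l * (((t + 1 : ℕ) : ℝ) * μ - ∑ y ∈ insert x V, g y))
          ≤ (1 + l * θ * (μ - g x) + l ^ 2) * ((N.choose t : ℝ) * Real.exp (t * l ^ 2)) := by
        intro x hx
        have hc : (X.erase x).card = N := by rw [Finset.card_erase_of_mem hx, hN]; rfl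
        have hih := ih (X.erase x) (by omega)
        rw [hc] at hih
        have hse : ∑ y ∈ X.erase x, g y = (N + 1) * μ - g x := by
          rw [← hsum, ← Finset.add_sum_erase X g hx]; ring
        have hEq : ∑ V ∈ (X.erase x).powersetCard t,
            Real.exp (l * (((t + 1 : ℕ) : ℝ) * μ - ∑ y ∈ insert x V, g y))
            = Real.exp (l * θ * (μ - g x)) * ∑ V ∈ (X.erase x).powersetCard t,
              Real.exp (l * (t * ((∑ y ∈ X.erase x, g y) / N) - ∑ y ∈ V, g y)) := by
          rw [Finset.mul_sum]
          refine Finset.sum_congr rfl fun V hV => ?_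
          rw [Finset.mem_powersetCard] at hV
          rw [Finset.sum_insert (fun h => by simpa using hV.1 h), ← Real.exp_add, hse, hθ]
          congr 1
          rcases Nat.eq_zero_or_pos N with h0 | h0
          · have : t = 0 := by omega
            subst this; simp; ring
          · have : (N : ℝ) ≠ 0 := by positivity
            push_cast
            field_simp
            ring
        rw [hEq]
        have hu : |l * θ * (μ - g x)| ≤ l := by
          have h1 : |μ - g x| ≤ 1 := by
            rw [abs_le]; constructor <;> linarith [hg0 x, hg1 x]
          rw [abs_mul, abs_mul, abs_of_nonneg hl0, abs_of_nonneg hθ0]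
          have : θ * |μ - g x| ≤ 1 := mul_le_one₀ hθ1 (abs_nonneg _) h1
          nlinarith
        have hexp := Real.abs_exp_sub_one_sub_id_le (hu.trans hl1)
        have hexp2 := (abs_le.1 hexp).2
        have hsq : (l * θ * (μ - g x)) ^ 2 ≤ l ^ 2 := by
          rw [← sq_abs]; exact pow_le_pow_left₀ (abs_nonneg _) hu 2
        refine mul_le_mul (by linarith) hih (Finset.sum_nonneg fun _ _ => (Real.exp_pos _).le) ?_
        have := Real.exp_pos (l * θ * (μ - g x))
        linarith
      refine (Finset.sum_le_sum step).trans ?_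
      rw [← Finset.sum_mul]
      have hs : ∑ x ∈ X, (1 + l * θ * (μ - g x) + l ^ 2) = (N + 1) * (1 + l ^ 2) := by
        rw [Finset.sum_add_distrib, Finset.sum_add_distrib, ← Finset.mul_sum,
          Finset.sum_sub_distrib, hsum]
        simp [hN]; ring
      rw [hs]
      have hch : ((N : ℝ) + 1) * (N.choose t : ℝ) = (X.card.choose (t + 1) : ℝ) * ((t : ℝ) + 1) := by
        rw [hN]; exact_mod_cast Nat.add_one_mul_choose_eq N t
      have he : 1 + l ^ 2 ≤ Real.exp (l ^ 2) := by linarith [Real.add_one_le_exp (l ^ 2)]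
      have hee : Real.exp (((t + 1 : ℕ) : ℝ) * l ^ 2) = Real.exp (l ^ 2) * Real.exp (t * l ^ 2) := by
        rw [← Real.exp_add]; congr 1; push_cast; ring
      rw [hee]
      calc ((N : ℝ) + 1) * (1 + l ^ 2) * ((N.choose t : ℝ) * Real.exp (t * l ^ 2))
          = (1 + l ^ 2) * ((((N : ℝ) + 1) * (N.choose t : ℝ)) * Real.exp (t * l ^ 2)) := by ring
        _ ≤ Real.exp (l ^ 2) * ((((N : ℝ) + 1) * (N.choose t : ℝ)) * Real.exp (t * l ^ 2)) := by
            gcongr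
        _ = _ := by rw [hch]; ring
    exact le_of_mul_le_mul_left key (by positivity)

/-- average of `f` over a finset -/
noncomputable def auxAvg {ι : Type} (s : Finset ι) (f : ι → ℝ) : ℝ := (∑ x ∈ s, f x) / s.card

lemma auxAvg_nonneg {ι : Type} (s : Finset ι) (f : ι → ℝ) (h : ∀ x, 0 ≤ f x) : 0 ≤ auxAvg s f :=
  div_nonneg (Finset.sum_nonneg fun x _ => h x) (by positivity)

lemma auxAvg_le_one {ι : Type} (s : Finset ι) (f : ι → ℝ) (h : ∀ x, f x ≤ 1) : auxAvg s f ≤ 1 := by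
  refine div_le_one_of_le₀ ?_ (by positivity)
  calc ∑ x ∈ s, f x ≤ ∑ x ∈ s, (1 : ℝ) := Finset.sum_le_sum fun x _ => h x
    _ = s.card := by simp

lemma auxAvg_comm {ι κ : Type} (s : Finset ι) (r : Finset κ) (f : ι → κ → ℝ) :
    auxAvg s (fun x => auxAvg r (f x)) = auxAvg r (fun y => auxAvg s (fun x => f x y)) := by
  unfold auxAvg
  rw [← Finset.sum_div, ← Finset.sum_div, Finset.sum_comm, div_right_comm]

lemma aux_tail {α : Type} [DecidableEq α] (g : α → ℝ) (hg0 : ∀ x, 0 ≤ g x) (hg1 : ∀ x, g x ≤ 1)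
    (ε : ℝ) (hε0 : 0 ≤ ε) (hε1 : ε ≤ 1) (t : ℕ) (ht : 0 < t) (X : Finset α) (htX : t ≤ X.card) :
    (((X.powersetCard t).filter fun W => auxAvg W g < auxAvg X g - ε).card : ℝ)
      ≤ Real.exp (-(t * ε ^ 2 / 4)) * ((X.powersetCard t).card : ℝ) := by
  have h := aux_mgf g hg0 hg1 (ε / 2) (by linarith) (by linarith) t X htX
  have h2 : (((X.powersetCard t).filter fun W => auxAvg W g < auxAvg X g - ε).card : ℝ)
      * Real.exp (t * ε ^ 2 / 2)
      ≤ ∑ W ∈ X.powersetCard t,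
        Real.exp (ε / 2 * (t * ((∑ x ∈ X, g x) / X.card) - ∑ x ∈ W, g x)) := by
    rw [← nsmul_eq_mul, ← Finset.sum_const]
    refine (Finset.sum_le_sum ?_).trans (Finset.sum_le_sum_of_subset_of_nonneg
      (Finset.filter_subset _ _) fun _ _ _ => (Real.exp_pos _).le)
    intro W hW
    rw [Finset.mem_filter, Finset.mem_powersetCard] at hW
    obtain ⟨⟨_, hc⟩, hlt⟩ := hW
    apply Real.exp_le_exp.2
    unfold auxAvg at hlt
    rw [hc] at hlt
    have ht' : (0 : ℝ) < t := by exact_mod_cast ht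
    rw [div_lt_iff₀ ht'] at hlt
    nlinarith
  rw [Finset.card_powersetCard]
  have h3 := h2.trans h
  have e1 : Real.exp (t * (ε / 2) ^ 2)
      = Real.exp (-(t * ε ^ 2 / 4)) * Real.exp (t * ε ^ 2 / 2) := by
    rw [← Real.exp_add]; congr 1; ring
  rw [e1] at h3
  refine le_of_mul_le_mul_right (h3.trans (le_of_eq ?_)) (Real.exp_pos (t * ε ^ 2 / 2))
  ring

lemma aux_sum_cons {β : Type} {k : ℕ} (S : Fin (k + 1) → Finset β)
    (F : (Fin (k + 1) → β) → ℝ) :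
    ∑ x ∈ Fintype.piFinset S, F x
      = ∑ a ∈ S 0, ∑ y ∈ Fintype.piFinset (Fin.tail S), F (Fin.cons a y) := by
  rw [← Finset.sum_product']
  refine Finset.sum_nbij' (fun x => (x 0, Fin.tail x)) (fun p => Fin.cons p.1 p.2) ?_ ?_ ?_ ?_ ?_
  · intro x hx
    rw [Fintype.mem_piFinset] at hx
    simp only [Finset.mem_product, Fintype.mem_piFinset]
    exact ⟨hx 0, fun i => hx i.succ⟩
  · rintro ⟨a, y⟩ hx
    simp only [Finset.mem_product, Fintype.mem_piFinset] at hx ⊢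
    intro i
    refine Fin.cases ?_ ?_ i
    · simpa using hx.1
    · intro j; simpa [Fin.tail] using hx.2 j
  · intro x _; simp
  · rintro ⟨a, y⟩ _; simp
  · intro x _; simp

lemma aux_card_cons {β : Type} {k : ℕ} (S : Fin (k + 1) → Finset β) :
    (Fintype.piFinset S).card = (S 0).card * (Fintype.piFinset (Fin.tail S)).card := by
  rw [Fintype.card_piFinset, Fintype.card_piFinset, Fin.prod_univ_succ]; rfl

lemma auxAvg_cons {β : Type} {k : ℕ} (S : Fin (k + 1) → Finset β)
    (F : (Fin (k + 1) → β) → ℝ) :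
    auxAvg (Fintype.piFinset S) F
      = auxAvg (S 0) fun a => auxAvg (Fintype.piFinset (Fin.tail S)) fun y => F (Fin.cons a y) := by
  unfold auxAvg
  rw [← Finset.sum_div, aux_sum_cons, aux_card_cons, div_div]
  push_cast
  rw [mul_comm]

lemma aux_main {α : Type} [DecidableEq α] (ε δ : ℝ) (hε0 : 0 ≤ ε) (hε1 : ε ≤ 1) (hδ : 0 ≤ δ)
    (k : ℕ) : ∀ (X : Fin k → Finset α) (t : Fin k → ℕ),
      (∀ i, 0 < t i ∧ t i ≤ (X i).card ∧ Real.exp (-(t i * ε ^ 2 / 4)) ≤ δ) →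
      ∀ f : (Fin k → α) → ℝ, (∀ x, 0 ≤ f x) → (∀ x, f x ≤ 1) →
      (((Fintype.piFinset fun i => (X i).powersetCard (t i)).filter fun W =>
        auxAvg (Fintype.piFinset W) f < auxAvg (Fintype.piFinset X) f - k * ε).card : ℝ)
      ≤ k * δ * ((Fintype.piFinset fun i => (X i).powersetCard (t i)).card : ℝ) := by
  induction k with
  | zero =>
    intro X t _ f _ _
    have : ∀ W : Fin 0 → Finset α, W = X := fun W => Subsingleton.elim _ _
    simp [this]
  | succ k ih =>
    intro X t h f hf0 hf1
    set P : Fin (k + 1) → Finset (Finset α) := fun i => (X i).powersetCard (t i) with hP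
    set T := (Fintype.piFinset (Fin.tail P)).card with hT
    set g : α → ℝ := fun a => auxAvg (Fintype.piFinset (Fin.tail X)) fun y => f (Fin.cons a y)
      with hg
    have hg0 : ∀ a, 0 ≤ g a := fun a => auxAvg_nonneg _ _ fun _ => hf0 _
    have hg1 : ∀ a, g a ≤ 1 := fun a => auxAvg_le_one _ _ fun _ => hf1 _
    have hμ : auxAvg (Fintype.piFinset X) f = auxAvg (X 0) g := auxAvg_cons X f
    have htail := aux_tail g hg0 hg1 ε hε0 hε1 (t 0) (h 0).1 (X 0) (h 0).2.1
    rw [Finset.card_filter]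
    push_cast
    rw [aux_sum_cons, aux_card_cons, ← hT]
    have hstep : ∀ V ∈ P 0, ∑ Y ∈ Fintype.piFinset (Fin.tail P),
        (if auxAvg (Fintype.piFinset (Fin.cons V Y : Fin (k + 1) → Finset α)) f
          < auxAvg (Fintype.piFinset X) f - ((k : ℝ) + 1) * ε then (1 : ℝ) else 0)
        ≤ (if auxAvg V g < auxAvg (X 0) g - ε then (1 : ℝ) else 0) * T + k * δ * T := by
      intro V hV
      split_ifs with hbad
      · have : ∑ Y ∈ Fintype.piFinset (Fin.tail P),
          (if auxAvg (Fintype.piFinset (Fin.cons V Y : Fin (k + 1) → Finset α)) f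
          < auxAvg (Fintype.piFinset X) f - ((k : ℝ) + 1) * ε then (1 : ℝ) else 0) ≤ T := by
          calc _ ≤ ∑ Y ∈ Fintype.piFinset (Fin.tail P), (1 : ℝ) :=
                Finset.sum_le_sum fun Y _ => by split_ifs <;> norm_num
            _ = T := by simp [hT]
        have h0 : 0 ≤ k * δ * T := by positivity
        linarith
      · have hih := ih (Fin.tail X) (Fin.tail t) (fun i => h i.succ)
          (fun y => auxAvg V fun a => f (Fin.cons a y))
          (fun y => auxAvg_nonneg _ _ fun _ => hf0 _) (fun y => auxAvg_le_one _ _ fun _ => hf1 _)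
        rw [zero_mul, zero_add]
        refine le_trans ?_ hih
        rw [Finset.card_filter]
        push_cast
        refine Finset.sum_le_sum fun Y _ => ?_
        have e1 : auxAvg (Fintype.piFinset (Fin.cons V Y : Fin (k + 1) → Finset α)) f
            = auxAvg (Fintype.piFinset Y) fun y => auxAvg V fun a => f (Fin.cons a y) := by
          rw [auxAvg_cons, auxAvg_comm]; simp
        have e2 : auxAvg (Fintype.piFinset (Fin.tail X)) (fun y => auxAvg V fun a => f (Fin.cons a y))
            = auxAvg V g := by
          rw [hg, auxAvg_comm]
        rw [e1, e2, hμ]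
        push Not at hbad
        split_ifs with h1 h2 <;> try norm_num
        exact h2 (by linarith)
    refine (Finset.sum_le_sum hstep).trans ?_
    rw [Finset.sum_add_distrib, ← Finset.sum_mul, Finset.sum_const, nsmul_eq_mul]
    have hb : ∑ V ∈ P 0, (if auxAvg V g < auxAvg (X 0) g - ε then (1 : ℝ) else 0)
        ≤ δ * (P 0).card := by
      have : ∑ V ∈ P 0, (if auxAvg V g < auxAvg (X 0) g - ε then (1 : ℝ) else 0)
          = (((P 0).filter fun W => auxAvg W g < auxAvg (X 0) g - ε).card : ℝ) := by
        rw [Finset.card_filter]; push_cast; rfl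
      rw [this]
      exact htail.trans (mul_le_mul_of_nonneg_right (h 0).2.2 (by positivity))
    have := mul_le_mul_of_nonneg_right hb (Nat.cast_nonneg (α := ℝ) T)
    push_cast
    linarith

open Classical in
lemma aux_count_le {α : Type} [DecidableEq α] {k : ℕ} (X : Fin k → Finset α)
    (hX : ∀ i j, i ≠ j → Disjoint (X i) (X j)) (H : Finset (Finset α)) (W : Fin k → Finset α)
    (hW : ∀ i, W i ⊆ X i) :
    ((Fintype.piFinset W).filter fun x => Finset.univ.image x ∈ H).card
      ≤ (H.filter fun e => e ⊆ Finset.univ.biUnion W).card := by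
  refine Finset.card_le_card_of_injOn (fun x => Finset.univ.image x) ?_ ?_
  · intro x hx
    simp only [Finset.coe_filter, Set.mem_ofPred_eq, Fintype.mem_piFinset] at hx ⊢
    refine ⟨hx.2, fun a ha => ?_⟩
    rw [Finset.mem_image] at ha
    obtain ⟨i, _, rfl⟩ := ha
    exact Finset.mem_biUnion.2 ⟨i, Finset.mem_univ _, hx.1 i⟩
  · intro x hx y hy hxy
    simp only [Finset.coe_filter, Set.mem_ofPred_eq, Fintype.mem_piFinset] at hx hy hxy
    funext i
    have : x i ∈ Finset.univ.image y := hxy ▸ Finset.mem_image_of_mem x (Finset.mem_univ i)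
    rw [Finset.mem_image] at this
    obtain ⟨j, _, hj⟩ := this
    by_cases hij : i = j
    · rw [← hj, hij]
    · exact absurd (hW j (hy.1 j))
        (hj ▸ Finset.disjoint_left.1 (hX i j hij) (hW i (hx.1 i)))

open Classical in
lemma aux_count_ge {α : Type} [DecidableEq α] {k : ℕ} (X : Fin k → Finset α)
    (hX : ∀ i j, i ≠ j → Disjoint (X i) (X j)) (H : Finset (Finset α))
    (hH : ∀ e ∈ H, (∀ i, (e.filter (· ∈ X i)).card = 1) ∧ e.card = k) :
    H.card ≤ ((Fintype.piFinset X).filter fun x => Finset.univ.image x ∈ H).card := by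
  refine Finset.card_le_card_of_surjOn (fun x => Finset.univ.image x) ?_
  intro e he
  have he' : e ∈ H := he
  obtain ⟨h1, h2⟩ := hH e he'
  have : ∀ i, ∃ a, a ∈ e ∧ a ∈ X i := by
    intro i
    obtain ⟨a, ha⟩ := Finset.card_pos.1 (by rw [h1 i]; norm_num : 0 < (e.filter (· ∈ X i)).card)
    exact ⟨a, (Finset.mem_filter.1 ha).1, (Finset.mem_filter.1 ha).2⟩
  choose x hxe hxX using this
  have hinj : Function.Injective x := by
    intro i j hij
    by_contra hne
    exact Finset.disjoint_left.1 (hX i j hne) (hxX i) (hij ▸ hxX j)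
  have him : Finset.univ.image x = e := by
    refine Finset.eq_of_subset_of_card_le ?_ ?_
    · intro a ha
      obtain ⟨i, _, rfl⟩ := Finset.mem_image.1 ha
      exact hxe i
    · rw [Finset.card_image_of_injective _ hinj, h2]; simp
  refine ⟨x, ?_, him⟩
  simp only [Finset.coe_filter, Set.mem_ofPred_eq, Fintype.mem_piFinset]
  exact ⟨hxX, him ▸ he'⟩

lemma aux_limit (a K : ℝ) (ha : 0 < a) :
    ∃ n0 : ℕ, ∀ n : ℕ, n0 ≤ n → (n : ℝ) ^ 2 * (K * Real.exp (-(a * n))) ≤ 1 := by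
  have h1 : Filter.Tendsto (fun x : ℝ => x ^ 2 * Real.exp (-x)) Filter.atTop (nhds 0) :=
    Real.tendsto_pow_mul_exp_neg_atTop_nhds_zero 2
  have h2 : Filter.Tendsto (fun n : ℕ => a * (n : ℝ)) Filter.atTop Filter.atTop :=
    Filter.Tendsto.const_mul_atTop ha tendsto_natCast_atTop_atTop
  have h3 := ((h1.comp h2).const_mul (K / a ^ 2))
  rw [mul_zero] at h3
  have h4 := h3.eventually (ge_mem_nhds (zero_lt_one))
  obtain ⟨n0, hn0⟩ := Filter.eventually_atTop.1 h4
  refine ⟨n0, fun n hn => ?_⟩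
  have := hn0 n hn
  simp only [Function.comp] at this
  refine le_trans (le_of_eq ?_) this
  field_simp


/-- Random splitting preserves density.  For all `c, β, k, b` there is `n₀` such that: if
`H` is a `k`-partite `k`-graph on classes `X₁, …, X_k` with `n ≤ |Xᵢ| ≤ bn` (`n ≥ n₀`) and
density at least `c`, and `β|Xᵢ| ≤ tᵢ ≤ |Xᵢ|`, then among all choices of `Wᵢ ⊆ Xᵢ` with
`|Wᵢ| = tᵢ` (uniform and independent over the classes), the proportion for which the induced
subgraph `H[W]` has density at most `c/2` is at most `1/n²`. -/
theorem stmt_11 (c β : ℝ) (k b : ℕ) (hc : 0 < c) (hc1 : c < 1) (hβ : 0 < β) (hβ1 : β < 1)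
    (hk : 2 ≤ k) (hb : 1 ≤ b) :
    ∃ n0 : ℕ, ∀ n, n0 ≤ n → ∀ (α : Type) [DecidableEq α],
      ∀ X : Fin k → Finset α, (∀ i j, i ≠ j → Disjoint (X i) (X j)) →
      (∀ i, n ≤ (X i).card ∧ (X i).card ≤ b * n) →
      ∀ H : Finset (Finset α),
      (∀ e ∈ H, (∀ i, (e.filter (· ∈ X i)).card = 1) ∧ e.card = k) →
      c * ∏ i, ((X i).card : ℝ) ≤ (H.card : ℝ) →
      ∀ t : Fin k → ℕ, (∀ i, β * (X i).card ≤ (t i : ℝ) ∧ t i ≤ (X i).card) →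
      n ^ 2 * ((Fintype.piFinset fun i => (X i).powersetCard (t i)).filter fun W =>
          ¬ (c / 2 * ∏ i, (t i : ℝ) <
            ((H.filter fun e => e ⊆ Finset.univ.biUnion W).card : ℝ))).card
        ≤ (Fintype.piFinset fun i => (X i).powersetCard (t i)).card := by
  classical
  set ε : ℝ := c / (4 * k) with hε
  have hkpos : (0 : ℝ) < k := by exact_mod_cast (by omega : 0 < k)
  have hk2 : (2 : ℝ) ≤ k := by exact_mod_cast hk
  have hε0 : 0 < ε := by positivity
  have hε1 : ε ≤ 1 := by
    rw [hε, div_le_one (by positivity)]; linarith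
  have hkε : k * ε = c / 4 := by rw [hε]; field_simp
  obtain ⟨n0, hn0⟩ := aux_limit (β * ε ^ 2 / 4) k (by positivity)
  refine ⟨max n0 1, fun n hn α _ X hX hcard H hH hd t ht => ?_⟩
  have hn1 : 1 ≤ n := (le_max_right _ _).trans hn
  have hnpos : (0 : ℝ) < n := by exact_mod_cast hn1
  have hlim := hn0 n ((le_max_left _ _).trans hn)
  have htn : ∀ i, β * n ≤ (t i : ℝ) := fun i =>
    (mul_le_mul_of_nonneg_left (by exact_mod_cast (hcard i).1) hβ.le).trans (ht i).1
  have htpos : ∀ i, (0 : ℝ) < t i := fun i => (mul_pos hβ hnpos).trans_le (htn i)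
  have hXpos : ∀ i, (0 : ℝ) < (X i).card := fun i => by
    exact_mod_cast hn1.trans (hcard i).1
  set f : (Fin k → α) → ℝ := fun x => if Finset.univ.image x ∈ H then 1 else 0 with hf
  have hmain := aux_main ε (Real.exp (-(β * ε ^ 2 / 4 * n))) hε0.le hε1 (Real.exp_pos _).le k X t
    (fun i => ⟨by exact_mod_cast htpos i, (ht i).2, by
      apply Real.exp_le_exp.2
      nlinarith [htn i, sq_nonneg ε, mul_le_mul_of_nonneg_right (htn i) (sq_nonneg ε)]⟩)
    f (fun x => by simp only [hf]; split_ifs <;> norm_num)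
    (fun x => by simp only [hf]; split_ifs <;> norm_num)
  set Q := Fintype.piFinset fun i => (X i).powersetCard (t i) with hQ
  have hμ : c ≤ auxAvg (Fintype.piFinset X) f := by
    unfold auxAvg
    rw [Fintype.card_piFinset]
    push_cast
    rw [le_div_iff₀ (Finset.prod_pos fun i _ => hXpos i)]
    refine hd.trans ?_
    have := aux_count_ge X hX H hH
    rw [Finset.card_filter (fun x => Finset.univ.image x ∈ H)] at this
    have h' : (H.card : ℝ) ≤ ((∑ x ∈ Fintype.piFinset X,
      if Finset.univ.image x ∈ H then 1 else 0 : ℕ) : ℝ) := by exact_mod_cast this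
    refine h'.trans (le_of_eq ?_)
    push_cast
    rfl
  have hsub : (Q.filter fun W =>
          ¬ (c / 2 * ∏ i, (t i : ℝ) <
            ((H.filter fun e => e ⊆ Finset.univ.biUnion W).card : ℝ))) ⊆
      Q.filter fun W => auxAvg (Fintype.piFinset W) f
        < auxAvg (Fintype.piFinset X) f - k * ε := by
    intro W hW
    rw [Finset.mem_filter] at hW ⊢
    refine ⟨hW.1, ?_⟩
    have hWQ := hW.1
    rw [hQ, Fintype.mem_piFinset] at hWQ
    simp only [Finset.mem_powersetCard] at hWQ
    have hle := not_lt.1 hW.2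
    have hcnt := aux_count_le X hX H W fun i => (hWQ i).1
    have hprod : (0 : ℝ) < ∏ i, (t i : ℝ) := Finset.prod_pos fun i _ => htpos i
    have hav : auxAvg (Fintype.piFinset W) f ≤ c / 2 := by
      unfold auxAvg
      rw [Fintype.card_piFinset]
      simp only [hWQ]
      push_cast
      rw [div_le_iff₀ hprod]
      refine le_trans ?_ hle
      rw [Finset.card_filter (fun x => Finset.univ.image x ∈ H)] at hcnt
      have h' : ((∑ x ∈ Fintype.piFinset W,
        if Finset.univ.image x ∈ H then 1 else 0 : ℕ) : ℝ) ≤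
        ((H.filter fun e => e ⊆ Finset.univ.biUnion W).card : ℝ) := by exact_mod_cast hcnt
      refine le_trans (le_of_eq ?_) h'
      push_cast
      rfl
    rw [hkε]
    linarith
  have hcc := Finset.card_le_card hsub
  have hfin : ((n : ℝ) ^ 2) * ((Q.filter fun W =>
          ¬ (c / 2 * ∏ i, (t i : ℝ) <
            ((H.filter fun e => e ⊆ Finset.univ.biUnion W).card : ℝ))).card : ℝ) ≤ Q.card := by
    calc _ ≤ ((n : ℝ) ^ 2) * (k * Real.exp (-(β * ε ^ 2 / 4 * n)) * Q.card) := by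
          refine mul_le_mul_of_nonneg_left (le_trans ?_ hmain) (by positivity)
          exact_mod_cast hcc
      _ = ((n : ℝ) ^ 2 * (k * Real.exp (-(β * ε ^ 2 / 4 * n)))) * Q.card := by ring
      _ ≤ 1 * Q.card := mul_le_mul_of_nonneg_right hlim (by positivity)
      _ = Q.card := one_mul _
  exact_mod_cast hfin
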